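/- Let h₁, h₂ ∈ ℝ² be non-collinear unit vectors and let w₁, w₂ be the widths of Ω parallel to h₁ and to h₂, respectively. Then sup{ ‖u_{h₁}‖₁ / ‖u_{h₂}‖₁ : u ∈ 𝒰_Ω, u ≢ 0 } = 2 w₁ / w₂ if and only if there exists a straight line parallel to h₂ that intersects both of the two edges of Ω parallel to h₁ (i.e. the line meets Ω ∩ ℓ⁺ and Ω ∩ ℓ⁻, where ℓ⁺, ℓ⁻ are the two lines of support of Ω parallel to h₁). -/

import Mathlib

open Set MeasureTheory
open scoped ENNReal

/-- Partial derivative of `u` in the `x` direction (junk value where `u` is not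
differentiable). -/
noncomputable def ux (u : ℝ × ℝ → ℝ) (z : ℝ × ℝ) : ℝ := fderiv ℝ u z (1, 0)

/-- Partial derivative of `u` in the `y` direction. -/
noncomputable def uy (u : ℝ × ℝ → ℝ) (z : ℝ × ℝ) : ℝ := fderiv ℝ u z (0, 1)

/-- Directional derivative of `u` in the direction `h`. -/
noncomputable def uh (h : ℝ × ℝ) (u : ℝ × ℝ → ℝ) (z : ℝ × ℝ) : ℝ := fderiv ℝ u z h

/-- The class `𝒰_Ω`: continuous concave functions on `Ω` vanishing on the boundary,
with uniformly bounded gradient over all interior points where it exists. -/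
def MemU (Ω : Set (ℝ × ℝ)) (u : ℝ × ℝ → ℝ) : Prop :=
  ContinuousOn u Ω ∧ ConcaveOn ℝ Ω u ∧ (∀ z ∈ frontier Ω, u z = 0) ∧
    ∃ C : ℝ, ∀ z ∈ interior Ω, ∀ g : (ℝ × ℝ) →L[ℝ] ℝ, HasFDerivAt u g z → ‖g‖ ≤ C

/-- The `L¹` norm of `f` over `Ω`. -/
noncomputable def L1N (Ω : Set (ℝ × ℝ)) (f : ℝ × ℝ → ℝ) : ℝ := ∫ z in Ω, |f z|

/-- The `L^p` norm of `f` over `Ω`, `p ∈ [1, ∞)`. -/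
noncomputable def LpN (Ω : Set (ℝ × ℝ)) (p : ℝ) (f : ℝ × ℝ → ℝ) : ℝ :=
  (∫ z in Ω, |f z| ^ p) ^ (1 / p)

/-- The `L^∞` norm (essential supremum) of `f` over `Ω`. -/
noncomputable def LinfN (Ω : Set (ℝ × ℝ)) (f : ℝ × ℝ → ℝ) : ℝ≥0∞ :=
  essSup (fun z => ENNReal.ofReal |f z|) (volume.restrict Ω)

/-- The width of `Ω` parallel to the (Euclidean unit) vector `h`: the distance between the
two lines of support of `Ω` parallel to `h`, i.e. the oscillation over `Ω` of the linear
functional given by the unit normal `(-h.2, h.1)` to `h`. -/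
noncomputable def widthPar (Ω : Set (ℝ × ℝ)) (h : ℝ × ℝ) : ℝ :=
  sSup ((fun z : ℝ × ℝ => -h.2 * z.1 + h.1 * z.2) '' Ω) -
    sInf ((fun z : ℝ × ℝ => -h.2 * z.1 + h.1 * z.2) '' Ω)

/-!
Cut `Ω` into chords parallel to `h`. Along a chord `u` is concave and vanishes at both ends, so
`|u_h|` integrates to twice the largest value of `u` there: `‖u_h‖₁` is twice the integral of the
profile of these largest values. The profile is nonnegative and concave over an interval whose
length is the width `w` of `Ω` parallel to `h`. If `m = max u`, then `m w ≤ ‖u_h‖₁ ≤ 2 m w`, whence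
`‖u_{h₁}‖₁ / ‖u_{h₂}‖₁ ≤ 2 w₁ / w₂`.

To come close to `2 w₁ / w₂`, the `h₁`-profile has to be nearly constant and the `h₂`-profile nearly
a tent. Hence the set where `u` is close to `m` must nearly reach both edges parallel to `h₁` while
staying in a thin strip parallel to `h₂`; by compactness some chord parallel to `h₂` joins the two
edges. Conversely, given such a chord, push its endpoints slightly into the interior and take the
minimum of a tent across the chord and a large multiple of the distance to the complement of `Ω`.
-/

/-! ### Concave functions of one variable -/

theorem lintegral_enorm_rightDeriv_of_nonneg {f f' : ℝ → ℝ} {a b : ℝ} (hab : a ≤ b)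
    (hcont : ContinuousOn f (Icc a b))
    (hderiv : ∀ x ∈ Ioo a b, HasDerivWithinAt f (f' x) (Ioi x) x)
    (hpos : ∀ x ∈ Ioo a b, 0 ≤ f' x) :
    ∫⁻ x in Icc a b, ‖f' x‖ₑ = ENNReal.ofReal (f b - f a) := by
  have hint := intervalIntegral.integrableOn_deriv_right_of_nonneg hcont hderiv hpos
  have hFTC := intervalIntegral.integral_eq_sub_of_hasDeriv_right_of_le hab hcont hderiv
    ((intervalIntegrable_iff_integrableOn_Ioc_of_le hab).2 hint)
  rw [← hFTC, intervalIntegral.integral_of_le hab, integral_Ioc_eq_integral_Ioo,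
    ofReal_integral_eq_lintegral_ofReal (hint.mono_set Ioo_subset_Ioc_self)
      ((ae_restrict_iff' measurableSet_Ioo).2 (Filter.Eventually.of_forall hpos)),
    ← setLIntegral_congr Ioo_ae_eq_Icc]
  exact setLIntegral_congr_fun measurableSet_Ioo fun x hx => Real.enorm_of_nonneg (hpos x hx)

section ConcaveOnInterval

variable {f : ℝ → ℝ} {a b : ℝ}

theorem hasDerivWithinAt_rightDeriv_of_concaveOn (hf : ConcaveOn ℝ (Icc a b) f) {x : ℝ}
    (hx : x ∈ Ioo a b) : HasDerivWithinAt f (derivWithin f (Ioi x) x) (Ioi x) x := by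
  have hneg := hf.neg.differentiableWithinAt_Ioi_of_mem_interior (by rwa [interior_Icc])
  simpa using hneg.neg.hasDerivWithinAt

theorem rightDeriv_nonneg_of_lt_max (hf : ConcaveOn ℝ (Icc a b) f) {x c : ℝ} (hx : x ∈ Ioo a b)
    (hc : c ∈ Icc a b) (hxc : x < c) (hmax : f x ≤ f c) : 0 ≤ derivWithin f (Ioi x) x := by
  refine le_trans ?_ (hf.slope_le_of_hasDerivWithinAt_Ioi (Ioo_subset_Icc_self hx) hc hxc
    (hasDerivWithinAt_rightDeriv_of_concaveOn hf hx))
  rw [slope_def_field]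
  exact div_nonneg (sub_nonneg.2 hmax) (sub_nonneg.2 hxc.le)

theorem rightDeriv_nonpos_of_max_lt (hf : ConcaveOn ℝ (Icc a b) f) {x c : ℝ} (hx : x ∈ Ioo a b)
    (hc : c ∈ Icc a b) (hcx : c < x) (hmax : f x ≤ f c) : derivWithin f (Ioi x) x ≤ 0 := by
  have hxint : x ∈ interior (Icc a b) := by rwa [interior_Icc]
  have hslope := (hf.neg.slope_le_leftDeriv hc (Ioo_subset_Icc_self hx) hcx
    (hf.neg.differentiableWithinAt_Iio_of_mem_interior hxint)).trans
    (hf.neg.leftDeriv_le_rightDeriv_of_mem_interior hxint)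
  rw [derivWithin.neg (s := Ioi x), slope_def_field] at hslope
  refine neg_nonneg.1 (le_trans (div_nonneg (sub_nonneg.2 ?_) (sub_nonneg.2 hcx.le)) hslope)
  exact neg_le_neg hmax

theorem lintegral_enorm_rightDeriv_of_concaveOn (hf : ConcaveOn ℝ (Icc a b) f)
    (hcont : ContinuousOn f (Icc a b)) {c : ℝ} (hc : c ∈ Icc a b)
    (hmax : IsMaxOn f (Icc a b) c) :
    ∫⁻ x in Icc a b, ‖derivWithin f (Ioi x) x‖ₑ =
      ENNReal.ofReal (f c - f a) + ENNReal.ofReal (f c - f b) := by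
  have hleft := lintegral_enorm_rightDeriv_of_nonneg hc.1
    (hcont.mono (Icc_subset_Icc_right hc.2))
    (fun x hx => hasDerivWithinAt_rightDeriv_of_concaveOn hf (Ioo_subset_Ioo_right hc.2 hx))
    (fun x hx => rightDeriv_nonneg_of_lt_max hf (Ioo_subset_Ioo_right hc.2 hx) hc hx.2
      (hmax ⟨hx.1.le, hx.2.le.trans hc.2⟩))
  have hright := lintegral_enorm_rightDeriv_of_nonneg (f := -f) hc.2
    (hcont.mono (Icc_subset_Icc_left hc.1)).neg
    (fun x hx =>
      (hasDerivWithinAt_rightDeriv_of_concaveOn hf (Ioo_subset_Ioo_left hc.1 hx)).neg)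
    (fun x hx => neg_nonneg.2 <| rightDeriv_nonpos_of_max_lt hf (Ioo_subset_Ioo_left hc.1 hx) hc
      hx.1 (hmax ⟨hc.1.trans hx.1.le, hx.2.le⟩))
  simp only [enorm_neg, Pi.neg_apply, neg_sub_neg] at hright
  rw [← restrict_Ioc_eq_restrict_Icc] at hleft hright ⊢
  rw [← Ioc_union_Ioc_eq_Ioc hc.1 hc.2, lintegral_union measurableSet_Ioc
    (Ioc_disjoint_Ioc_of_le le_rfl), hleft, hright]

theorem add_le_add_reflect_of_concaveOn (hf : ConcaveOn ℝ (Icc a b) f) {x : ℝ}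
    (hx : x ∈ Icc a b) : f a + f b ≤ f x + f (a + b - x) := by
  have hab := hx.1.trans hx.2
  obtain ⟨s, t, hs, ht, hst, rfl⟩ := (segment_eq_Icc hab).ge hx
  have hA := left_mem_Icc.2 hab
  have hB := right_mem_Icc.2 hab
  have h₁ := hf.2 hA hB hs ht hst
  have h₂ := hf.2 hA hB ht hs ((add_comm t s).trans hst)
  have hreflect : a + b - (s • a + t • b) = t • a + s • b := by
    simp only [smul_eq_mul]
    linear_combination (a + b) * (-hst)
  rw [hreflect]
  simp only [smul_eq_mul] at h₁ h₂ ⊢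
  linear_combination h₁ + h₂ + (f a + f b) * (-hst)

theorem integrableOn_Icc_of_concaveOn (hf : ConcaveOn ℝ (Icc a b) f) :
    IntegrableOn f (Icc a b) := by
  have hmeas : AEStronglyMeasurable f (volume.restrict (Icc a b)) := by
    rw [← Measure.restrict_congr_set Ioo_ae_eq_Icc, ← interior_Icc]
    exact hf.continuousOn_interior.aestronglyMeasurable isOpen_interior.measurableSet
  have hlow {x : ℝ} (hx : x ∈ Icc a b) : min (f a) (f b) ≤ f x :=
    have hab := hx.1.trans hx.2
    hf.min_le_of_mem_Icc (left_mem_Icc.2 hab) (right_mem_Icc.2 hab) hx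
  have hupp {x : ℝ} (hx : x ∈ Icc a b) : f x ≤ 2 * f ((a + b) / 2) - min (f a) (f b) := by
    have hx' : a + b - x ∈ Icc a b := ⟨by linarith [hx.2], by linarith [hx.1]⟩
    have hmid := hf.2 hx hx' (half_pos one_pos).le (half_pos one_pos).le (add_halves 1)
    have hcenter : (1 / 2 : ℝ) • x + (1 / 2 : ℝ) • (a + b - x) = (a + b) / 2 := by
      simp only [smul_eq_mul]
      ring
    rw [hcenter, smul_eq_mul, smul_eq_mul] at hmid
    linarith [hlow hx']
  exact integrable_of_le_of_le hmeas
    ((ae_restrict_iff' measurableSet_Icc).2 (.of_forall fun _ => hlow))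
    ((ae_restrict_iff' measurableSet_Icc).2 (.of_forall fun _ => hupp))
    (integrable_const _) (integrable_const _)

theorem mul_add_le_two_mul_integral_of_concaveOn (hf : ConcaveOn ℝ (Icc a b) f) (hab : a ≤ b) :
    (b - a) * (f a + f b) ≤ 2 * ∫ x in a..b, f x := by
  have hint : IntervalIntegrable f volume a b :=
    (intervalIntegrable_iff_integrableOn_Icc_of_le hab).2 (integrableOn_Icc_of_concaveOn hf)
  have hint' : IntervalIntegrable (fun x => f (a + b - x)) volume a b := by
    simpa using (hint.comp_sub_left (a + b)).symm
  calc
    (b - a) * (f a + f b) = ∫ _ in a..b, f a + f b := by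
      rw [intervalIntegral.integral_const, smul_eq_mul]
    _ ≤ ∫ x in a..b, f x + f (a + b - x) :=
      intervalIntegral.integral_mono_on hab intervalIntegrable_const (hint.add hint')
        fun x hx => add_le_add_reflect_of_concaveOn hf hx
    _ = 2 * ∫ x in a..b, f x := by
      rw [intervalIntegral.integral_add hint hint', intervalIntegral.integral_comp_sub_left,
        add_sub_cancel_left, add_sub_cancel_right, two_mul]

theorem mul_add_abs_sub_le_two_mul_integral_of_concaveOn (hf : ConcaveOn ℝ (Icc a b) f)
    (ha : 0 ≤ f a) (hb : 0 ≤ f b) {p q k : ℝ} (hp : p ∈ Icc a b) (hq : q ∈ Icc a b)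
    (hkp : k ≤ f p) (hkq : k ≤ f q) :
    k * ((b - a) + |q - p|) ≤ 2 * ∫ x in a..b, f x := by
  wlog hpq : p ≤ q generalizing p q
  · rw [abs_sub_comm]
    exact this hq hp hkq hkp (le_of_not_ge hpq)
  have hchord {c d : ℝ} (hc : c ∈ Icc a b) (hd : d ∈ Icc a b) (hcd : c ≤ d) :=
    mul_add_le_two_mul_integral_of_concaveOn
      (hf.subset (Icc_subset_Icc hc.1 hd.2) (convex_Icc c d)) hcd
  have hint {c d : ℝ} (hc : c ∈ Icc a b) (hd : d ∈ Icc a b) (hcd : c ≤ d) :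
      IntervalIntegrable f volume c d := (intervalIntegrable_iff_integrableOn_Icc_of_le hcd).2 <|
    (integrableOn_Icc_of_concaveOn hf).mono_set (Icc_subset_Icc hc.1 hd.2)
  have hab := hp.1.trans hp.2
  have hA := left_mem_Icc.2 hab
  have hB := right_mem_Icc.2 hab
  rw [abs_of_nonneg (sub_nonneg.2 hpq),
    ← intervalIntegral.integral_add_adjacent_intervals (hint hA hp hp.1) (hint hp hB hp.2),
    ← intervalIntegral.integral_add_adjacent_intervals (hint hp hq hpq) (hint hq hB hq.2)]
  have h₁ : (p - a) * k ≤ (p - a) * (f a + f p) :=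
    mul_le_mul_of_nonneg_left (by linarith) (sub_nonneg.2 hp.1)
  have h₂ : (q - p) * (2 * k) ≤ (q - p) * (f p + f q) :=
    mul_le_mul_of_nonneg_left (by linarith) (sub_nonneg.2 hpq)
  have h₃ : (b - q) * k ≤ (b - q) * (f q + f b) :=
    mul_le_mul_of_nonneg_left (by linarith) (sub_nonneg.2 hq.2)
  linarith [hchord hA hp hp.1, hchord hp hq hpq, hchord hq hB hq.2]

end ConcaveOnInterval

theorem integral_le_of_le_of_le_off_Icc {f : ℝ → ℝ} {a b α β m k : ℝ}
    (hf : IntegrableOn f (Icc a b)) (hα : α ∈ Icc a b) (hβ : β ∈ Icc a b) (hαβ : α ≤ β)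
    (hm : ∀ x ∈ Icc a b, f x ≤ m) (hk : ∀ x ∈ Icc a b, x ∉ Icc α β → f x ≤ k) :
    ∫ x in a..b, f x ≤ m * (β - α) + k * ((b - a) - (β - α)) := by
  have hint {c d : ℝ} (hc : c ∈ Icc a b) (hd : d ∈ Icc a b) (hcd : c ≤ d) :
      IntervalIntegrable f volume c d := (intervalIntegrable_iff_integrableOn_Icc_of_le hcd).2 <|
    hf.mono_set (Icc_subset_Icc hc.1 hd.2)
  have hpiece {c d M : ℝ} (hc : c ∈ Icc a b) (hd : d ∈ Icc a b) (hcd : c ≤ d)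
      (hM : ∀ x ∈ Ioo c d, f x ≤ M) : ∫ x in c..d, f x ≤ (d - c) * M := by
    simpa using intervalIntegral.integral_mono_on_of_le_Ioo hcd (hint hc hd hcd)
      intervalIntegrable_const hM
  have hab := hα.1.trans hα.2
  have hA := left_mem_Icc.2 hab
  have hB := right_mem_Icc.2 hab
  rw [← intervalIntegral.integral_add_adjacent_intervals (hint hA hα hα.1) (hint hα hB hα.2),
    ← intervalIntegral.integral_add_adjacent_intervals (hint hα hβ hαβ) (hint hβ hB hβ.2)]
  have h₁ := hpiece hA hα hα.1 fun x hx =>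
    hk x ⟨hx.1.le, hx.2.le.trans hα.2⟩ fun h => hx.2.not_ge h.1
  have h₂ := hpiece hα hβ hαβ fun x hx => hm x ⟨hα.1.trans hx.1.le, hx.2.le.trans hβ.2⟩
  have h₃ := hpiece hβ hB hβ.2 fun x hx =>
    hk x ⟨hβ.1.trans hx.1.le, hx.2.le⟩ fun h => hx.1.not_ge h.2
  linarith

/-! ### Slicing along fibres -/

theorem ae_differentiableAt_of_concaveOn {E : Type*} [NormedAddCommGroup E]
    [NormedSpace ℝ E] [FiniteDimensional ℝ E] [MeasurableSpace E] [BorelSpace E]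
    (μ : Measure E) [μ.IsAddHaarMeasure] {s : Set E} {f : E → ℝ} (hf : ConcaveOn ℝ s f) :
    ∀ᵐ x ∂μ, x ∈ s → DifferentiableAt ℝ f x := by
  have : ProperSpace E := FiniteDimensional.proper ℝ E
  have hinterior : ∀ᵐ x ∂μ, x ∈ interior s → DifferentiableAt ℝ f x := by
    refine measure_null_of_locally_null _ fun x hx => ?_
    have hx : x ∈ interior s := (Classical.not_imp.1 hx).1
    obtain ⟨K, t, ht, hK⟩ := hf.locallyLipschitzOn_interior hx
    rw [isOpen_interior.nhdsWithin_eq hx] at ht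
    obtain ⟨o, hot, ho, hxo⟩ := mem_nhds_iff.1 ht
    refine ⟨_, inter_mem_nhdsWithin _ (ho.mem_nhds hxo), ?_⟩
    refine measure_mono_null ?_ ((hK.mono hot).ae_differentiableWithinAt_of_mem (μ := μ))
    rintro y ⟨hy, hyo⟩ hdiff
    exact hy fun _ => (hdiff hyo).differentiableAt (ho.mem_nhds hyo)
  have hfrontier : ∀ᵐ x ∂μ, x ∉ frontier s :=
    measure_eq_zero_iff_ae_notMem.1 (hf.1.addHaar_frontier μ)
  filter_upwards [hinterior, hfrontier] with x hx hxfr hxs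
  exact hx (by_contra fun hxi => hxfr ⟨subset_closure hxs, hxi⟩)

section FiberSup

/-- The supremum of `u` over the part of `Ω` in the fibre of `π` over `s`. For a linear form `π` on
the plane this is the largest value of `u` on a chord of `Ω` parallel to `ker π`. It is `0` over the
points with empty fibre. -/
noncomputable def fiberSup {E F : Type*} (π : E → F) (Ω : Set E) (u : E → ℝ) (s : F) : ℝ :=
  sSup (u '' (Ω ∩ π ⁻¹' {s}))

theorem fiberSup_of_notMem_image {E F : Type*} {π : E → F} {Ω : Set E} (u : E → ℝ) {s : F}
    (hs : s ∉ π '' Ω) : fiberSup π Ω u s = 0 := by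
  have hempty : Ω ∩ π ⁻¹' {s} = ∅ :=
    eq_empty_of_forall_notMem fun z hz => hs ⟨z, hz⟩
  rw [fiberSup, hempty, image_empty, Real.sSup_empty]

theorem fiberSup_comp_of_surjective {D E F : Type*} {e : D → E} (he : e.Surjective) (π : E → F)
    (Ω : Set E) (u : E → ℝ) : fiberSup (π ∘ e) (e ⁻¹' Ω) (u ∘ e) = fiberSup π Ω u := by
  funext s
  rw [fiberSup, fiberSup, preimage_comp, ← preimage_inter, image_comp, he.image_preimage]

variable {E F : Type*} [TopologicalSpace E] [TopologicalSpace F] [T1Space F] {π : E → F}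
  {Ω : Set E} {u : E → ℝ}

theorem exists_eq_fiberSup (hΩ : IsCompact Ω) (hπ : Continuous π) (hu : ContinuousOn u Ω) {s : F}
    (hs : s ∈ π '' Ω) : ∃ z ∈ Ω, π z = s ∧ u z = fiberSup π Ω u s := by
  obtain ⟨z, ⟨hz, hzs⟩, hmax⟩ :=
    (hΩ.inter_right (isClosed_singleton.preimage hπ)).exists_sSup_image_eq hs
      (hu.mono inter_subset_left)
  exact ⟨z, hz, hzs, hmax.symm⟩

theorem le_fiberSup (hΩ : IsCompact Ω) (hπ : Continuous π) (hu : ContinuousOn u Ω) {z : E}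
    (hz : z ∈ Ω) : u z ≤ fiberSup π Ω u (π z) :=
  le_csSup ((hΩ.inter_right (isClosed_singleton.preimage hπ)).bddAbove_image
    (hu.mono inter_subset_left)) (mem_image_of_mem u ⟨hz, rfl⟩)

theorem concaveOn_fiberSup [AddCommGroup E] [Module ℝ E] [AddCommGroup F] [Module ℝ F]
    {π : E →L[ℝ] F} (hΩ : IsCompact Ω) (hu : ContinuousOn u Ω) (hconc : ConcaveOn ℝ Ω u) :
    ConcaveOn ℝ (π '' Ω) (fiberSup π Ω u) := by
  refine ⟨hconc.1.linear_image π.toLinearMap, fun s hs t ht a b ha hb hab => ?_⟩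
  obtain ⟨x, hx, rfl, hxs⟩ := exists_eq_fiberSup hΩ π.continuous hu hs
  obtain ⟨y, hy, rfl, hyt⟩ := exists_eq_fiberSup hΩ π.continuous hu ht
  rw [← hxs, ← hyt, ← map_smul, ← map_smul, ← map_add]
  exact (hconc.2 hx hy ha hb hab).trans
    (le_fiberSup hΩ π.continuous hu (hconc.1 hx hy ha hb hab))

end FiberSup

section Slicing

variable {F : Type*} [NormedAddCommGroup F] [NormedSpace ℝ F] {Ω : Set (F × ℝ)} {u : F × ℝ → ℝ}
  {s : F}

theorem concaveOn_slice (hu : ConcaveOn ℝ Ω u) (s : F) :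
    ConcaveOn ℝ (Prod.mk s ⁻¹' Ω) fun t => u (s, t) :=
  hu.comp_affineMap ((AffineMap.const ℝ ℝ s).prod (AffineMap.id ℝ ℝ))

theorem exists_slice_eq_Icc (hΩ : IsCompact Ω) (hconv : Convex ℝ Ω) (hs : s ∈ Prod.fst '' Ω) :
    ∃ a b, a ≤ b ∧ Prod.mk s ⁻¹' Ω = Icc a b ∧ (s, a) ∈ frontier Ω ∧ (s, b) ∈ frontier Ω := by
  have hcont : Continuous fun t : ℝ => (s, t) := by fun_prop
  have hslice : IsCompact (Prod.mk s ⁻¹' Ω) :=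
    (hΩ.image continuous_snd).of_isClosed_subset (hΩ.isClosed.preimage hcont)
      fun t ht => ⟨(s, t), ht, rfl⟩
  have hsliceConvex : Convex ℝ (Prod.mk s ⁻¹' Ω) :=
    (concaveOn_slice (concaveOn_const 0 hconv) s).1
  obtain ⟨⟨s, t⟩, ht, rfl⟩ := hs
  have hIcc := eq_Icc_of_connected_compact ⟨⟨t, ht⟩, hsliceConvex.isPreconnected⟩ hslice
  generalize sInf (Prod.mk s ⁻¹' Ω) = a, sSup (Prod.mk s ⁻¹' Ω) = b at hIcc
  have hab : a ≤ b := nonempty_Icc.1 ⟨t, hIcc.le ht⟩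
  have hfrontier {r : ℝ} (hr : r ∈ Icc a b) (hr' : r ∉ Ioo a b) : (s, r) ∈ frontier Ω := by
    rw [hΩ.isClosed.frontier_eq]
    refine ⟨hIcc.ge hr, fun hint => hr' ?_⟩
    rw [← interior_Icc, ← hIcc]
    exact preimage_interior_subset_interior_preimage hcont hint
  exact ⟨a, b, hab, hIcc, hfrontier (left_mem_Icc.2 hab) fun h => h.1.false,
    hfrontier (right_mem_Icc.2 hab) fun h => h.2.false⟩

theorem nonneg_of_concaveOn_of_frontier (hΩ : IsCompact Ω) (hconc : ConcaveOn ℝ Ω u)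
    (hzero : ∀ z ∈ frontier Ω, u z = 0) {z : F × ℝ} (hz : z ∈ Ω) : 0 ≤ u z := by
  obtain ⟨a, b, hab, hIcc, ha, hb⟩ := exists_slice_eq_Icc hΩ hconc.1 (mem_image_of_mem Prod.fst hz)
  have hslice := concaveOn_slice hconc z.1
  rw [hIcc] at hslice
  have hmin := hslice.min_le_of_mem_Icc (left_mem_Icc.2 hab) (right_mem_Icc.2 hab)
    (hIcc.le (mem_preimage.2 hz))
  simpa only [hzero _ ha, hzero _ hb, min_self] using hmin

theorem setLIntegral_enorm_fderiv_slice (hΩ : IsCompact Ω) (hcont : ContinuousOn u Ω)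
    (hconc : ConcaveOn ℝ Ω u) (hzero : ∀ z ∈ frontier Ω, u z = 0)
    (hdiff : ∀ᵐ t : ℝ, (s, t) ∈ Ω → DifferentiableAt ℝ u (s, t)) :
    ∫⁻ t in Prod.mk s ⁻¹' Ω, ‖fderiv ℝ u (s, t) (0, 1)‖ₑ =
      ENNReal.ofReal (2 * fiberSup Prod.fst Ω u s) := by
  by_cases hs : s ∈ Prod.fst '' Ω
  swap
  · have hempty : Prod.mk s ⁻¹' Ω = ∅ :=
      eq_empty_of_forall_notMem fun t ht => hs ⟨(s, t), ht, rfl⟩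
    rw [fiberSup_of_notMem_image u hs, hempty, setLIntegral_empty, mul_zero, ENNReal.ofReal_zero]
  obtain ⟨a, b, -, hIcc, ha, hb⟩ := exists_slice_eq_Icc hΩ hconc.1 hs
  obtain ⟨⟨s, c⟩, hc, rfl, hcmax⟩ := exists_eq_fiberSup hΩ continuous_fst hcont hs
  have hmax : IsMaxOn (fun t => u (s, t)) (Icc a b) c := fun t ht =>
    (le_fiberSup hΩ continuous_fst hcont (hIcc.ge ht)).trans_eq hcmax.symm
  have hsliceConc := concaveOn_slice hconc s
  have hsliceCont : ContinuousOn (fun t => u (s, t)) (Prod.mk s ⁻¹' Ω) :=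
    hcont.comp (by fun_prop) fun _ => id
  have hderiv : ∀ᵐ t : ℝ, t ∈ Icc a b →
      ‖fderiv ℝ u (s, t) (0, 1)‖ₑ = ‖derivWithin (fun t => u (s, t)) (Ioi t) t‖ₑ := by
    filter_upwards [hdiff] with t ht htI
    have hline := (ht (hIcc.ge htI)).hasFDerivAt.comp_hasDerivAt t
      ((hasDerivAt_const t s).prodMk (hasDerivAt_id t))
    rw [← hline.hasDerivWithinAt.derivWithin (uniqueDiffWithinAt_Ioi t)]
    rfl
  rw [hIcc] at hsliceConc hsliceCont ⊢
  rw [setLIntegral_congr_fun_ae measurableSet_Icc hderiv,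
    lintegral_enorm_rightDeriv_of_concaveOn hsliceConc hsliceCont (hIcc.le hc) hmax,
    hzero _ ha, hzero _ hb, sub_zero, hcmax, ← ENNReal.ofReal_add, two_mul]
  all_goals exact hcmax ▸ nonneg_of_concaveOn_of_frontier hΩ hconc hzero hc

theorem setLIntegral_enorm_fderiv_eq_lintegral_fiberSup [FiniteDimensional ℝ F]
    [MeasurableSpace F] [BorelSpace F] (μ : Measure F) [μ.IsAddHaarMeasure] (hΩ : IsCompact Ω)
    (hcont : ContinuousOn u Ω) (hconc : ConcaveOn ℝ Ω u) (hzero : ∀ z ∈ frontier Ω, u z = 0) :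
    ∫⁻ z in Ω, ‖fderiv ℝ u z (0, 1)‖ₑ ∂μ.prod volume =
      ∫⁻ s, ENNReal.ofReal (2 * fiberSup Prod.fst Ω u s) ∂μ := by
  have : ProperSpace F := FiniteDimensional.proper ℝ F
  have hmeas : Measurable fun z => ‖fderiv ℝ u z (0, 1)‖ₑ :=
    (measurable_fderiv_apply_const ℝ u (0, 1)).enorm
  rw [← lintegral_indicator hΩ.measurableSet,
    lintegral_prod _ (hmeas.indicator hΩ.measurableSet).aemeasurable]
  refine lintegral_congr_ae ?_
  filter_upwards [Measure.ae_ae_of_ae_prod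
    (ae_differentiableAt_of_concaveOn (μ.prod volume) hconc)] with s hs
  rw [← setLIntegral_enorm_fderiv_slice hΩ hcont hconc hzero hs,
    ← lintegral_indicator (hΩ.measurableSet.preimage measurable_prodMk_left)]
  rfl

end Slicing

/-! ### Directional derivatives of functions vanishing on the boundary -/

section LinearForm

variable {E : Type*} [NormedAddCommGroup E] [NormedSpace ℝ E] {Ω : Set E} {f : E →L[ℝ] ℝ}

theorem image_eq_Icc_of_isCompact_of_convex (hΩ : IsCompact Ω) (hconv : Convex ℝ Ω)
    (hne : Ω.Nonempty) (f : E →L[ℝ] ℝ) : f '' Ω = Icc (sInf (f '' Ω)) (sSup (f '' Ω)) :=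
  eq_Icc_of_connected_compact
    ⟨hne.image f, hconv.isPreconnected.image f f.continuous.continuousOn⟩ (hΩ.image f.continuous)

theorem apply_mem_Icc_of_isCompact (hΩ : IsCompact Ω) (f : E →L[ℝ] ℝ) {z : E} (hz : z ∈ Ω) :
    f z ∈ Icc (sInf (f '' Ω)) (sSup (f '' Ω)) :=
  subset_Icc_csInf_csSup (hΩ.image f.continuous).bddBelow (hΩ.image f.continuous).bddAbove
    (mem_image_of_mem f hz)

theorem apply_mem_Ioo_of_mem_interior (hΩ : IsCompact Ω) (hf : f ≠ 0) {z : E}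
    (hz : z ∈ interior Ω) : f z ∈ Ioo (sInf (f '' Ω)) (sSup (f '' Ω)) := by
  rw [← interior_Icc]
  refine interior_maximal ?_ (f.isOpenMap_of_ne_zero hf _ isOpen_interior) (mem_image_of_mem f hz)
  exact image_subset_iff.2 fun y hy => apply_mem_Icc_of_isCompact hΩ f (interior_subset hy)

end LinearForm

/-- The linear form whose level lines are the lines parallel to `h`: the scalar product with
`(-h.2, h.1)`. Over `Ω` it oscillates by exactly `widthPar Ω h`. -/
noncomputable def normalForm (h : ℝ × ℝ) : ℝ × ℝ →L[ℝ] ℝ :=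
  (-h.2) • ContinuousLinearMap.fst ℝ ℝ ℝ + h.1 • ContinuousLinearMap.snd ℝ ℝ ℝ

theorem normalForm_apply (h z : ℝ × ℝ) : normalForm h z = -h.2 * z.1 + h.1 * z.2 := rfl

theorem sq_add_sq_ne_zero {h : ℝ × ℝ} (hh : h ≠ 0) : h.1 ^ 2 + h.2 ^ 2 ≠ 0 := by
  contrapose! hh
  exact Prod.ext (by simpa using (by nlinarith [sq_nonneg h.1, sq_nonneg h.2] : h.1 ^ 2 = 0))
    (by simpa using (by nlinarith [sq_nonneg h.1, sq_nonneg h.2] : h.2 ^ 2 = 0))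

theorem normalForm_ne_zero {h : ℝ × ℝ} (hh : h ≠ 0) : normalForm h ≠ 0 := by
  intro hzero
  have hnormal := DFunLike.congr_fun hzero (-h.2, h.1)
  rw [normalForm_apply, zero_apply] at hnormal
  exact sq_add_sq_ne_zero hh (by linear_combination hnormal)

theorem normalForm_eq_iff {h : ℝ × ℝ} (hh : h ≠ 0) {x y : ℝ × ℝ} :
    normalForm h x = normalForm h y ↔ ∃ t : ℝ, x = y + t • h := by
  have hn := sq_add_sq_ne_zero hh
  simp only [normalForm_apply]
  constructor
  · intro hxy
    refine ⟨(h.1 * (x.1 - y.1) + h.2 * (x.2 - y.2)) / (h.1 ^ 2 + h.2 ^ 2), Prod.ext ?_ ?_⟩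
    · simp only [Prod.fst_add, Prod.smul_fst, smul_eq_mul]
      field_simp
      linear_combination (-h.2) * hxy
    · simp only [Prod.snd_add, Prod.smul_snd, smul_eq_mul]
      field_simp
      linear_combination h.1 * hxy
  · rintro ⟨t, rfl⟩
    simp only [Prod.fst_add, Prod.smul_fst, Prod.snd_add, Prod.smul_snd, smul_eq_mul]
    ring

theorem exists_measurePreserving_normalForm_eq_fst {h : ℝ × ℝ} (hh : h ≠ 0) :
    ∃ e : (ℝ × ℝ) ≃L[ℝ] ℝ × ℝ,
      MeasurePreserving e ∧ normalForm h ∘ e = Prod.fst ∧ e (0, 1) = h := by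
  have hn := sq_add_sq_ne_zero hh
  let L : ℝ × ℝ →ₗ[ℝ] ℝ × ℝ := Matrix.toLin (.finTwoProd ℝ) (.finTwoProd ℝ)
    !![-h.2 / (h.1 ^ 2 + h.2 ^ 2), h.1; h.1 / (h.1 ^ 2 + h.2 ^ 2), h.2]
  have hdet : LinearMap.det L = -1 := by
    rw [LinearMap.det_toLin, Matrix.det_fin_two_of]
    field_simp
    ring
  have hdet_ne : LinearMap.det L ≠ 0 := by rw [hdet]; norm_num
  refine ⟨(L.equivOfDetNeZero hdet_ne).toContinuousLinearEquiv, ?_, ?_, ?_⟩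
  · refine ⟨L.continuous_of_finiteDimensional.measurable, ?_⟩
    change Measure.map L volume = volume
    rw [Measure.map_linearMap_addHaar_eq_smul_addHaar _ hdet_ne, hdet]
    norm_num
  · funext w
    change normalForm h (L w) = w.1
    rw [normalForm_apply, Matrix.toLin_finTwoProd_apply]
    field_simp
    ring
  · change L (0, 1) = h
    rw [Matrix.toLin_finTwoProd_apply]
    simp

section DirectionalNorm

variable {Ω : Set (ℝ × ℝ)} {u : ℝ × ℝ → ℝ} {h : ℝ × ℝ}

theorem MemU.nonneg (hΩ : IsCompact Ω) (hu : MemU Ω u) {z : ℝ × ℝ} (hz : z ∈ Ω) : 0 ≤ u z :=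
  nonneg_of_concaveOn_of_frontier hΩ hu.2.1 hu.2.2.1 hz

theorem setLIntegral_enorm_uh (hΩ : IsCompact Ω) (hu : MemU Ω u) (hh : h ≠ 0) :
    ∫⁻ z in Ω, ‖uh h u z‖ₑ = ∫⁻ s, ENNReal.ofReal (2 * fiberSup (normalForm h) Ω u s) := by
  obtain ⟨hcont, hconc, hzero, -⟩ := hu
  obtain ⟨e, he, hfst, he₁⟩ := exists_measurePreserving_normalForm_eq_fst hh
  have hslice := setLIntegral_enorm_fderiv_eq_lintegral_fiberSup volume
    (e.toHomeomorph.isCompact_preimage.2 hΩ) (hcont.comp e.continuous.continuousOn fun _ => id)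
    (hconc.comp_linearMap e.toLinearMap) fun w hw =>
      hzero _ ((e.toHomeomorph.preimage_frontier Ω).ge hw)
  rw [← he.setLIntegral_comp_preimage_emb e.toHomeomorph.measurableEmbedding,
    ← fiberSup_comp_of_surjective e.surjective, hfst]
  refine Eq.trans (lintegral_congr fun w => ?_) hslice
  rw [uh, ← he₁]
  exact congrArg (fun g : ℝ × ℝ →L[ℝ] ℝ => ‖g (0, 1)‖ₑ) e.comp_right_fderiv.symm

theorem MemU.concaveOn_fiberSup_normalForm (hΩ : IsCompact Ω) (hne : Ω.Nonempty)
    (hu : MemU Ω u) (h : ℝ × ℝ) :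
    ConcaveOn ℝ (Icc (sInf (normalForm h '' Ω)) (sSup (normalForm h '' Ω)))
      (fiberSup (normalForm h) Ω u) := by
  rw [← image_eq_Icc_of_isCompact_of_convex hΩ hu.2.1.1 hne]
  exact concaveOn_fiberSup hΩ hu.1 hu.2.1

theorem MemU.exists_eq_fiberSup_normalForm (hΩ : IsCompact Ω) (hne : Ω.Nonempty)
    (hu : MemU Ω u) {s : ℝ}
    (hs : s ∈ Icc (sInf (normalForm h '' Ω)) (sSup (normalForm h '' Ω))) :
    ∃ z ∈ Ω, normalForm h z = s ∧ u z = fiberSup (normalForm h) Ω u s := by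
  rw [← image_eq_Icc_of_isCompact_of_convex hΩ hu.2.1.1 hne] at hs
  exact exists_eq_fiberSup hΩ (normalForm h).continuous hu.1 hs

theorem MemU.fiberSup_nonneg {F : Type*} (hΩ : IsCompact Ω) (hu : MemU Ω u) (π : ℝ × ℝ → F)
    (s : F) : 0 ≤ fiberSup π Ω u s :=
  Real.sSup_nonneg (forall_mem_image.2 fun _ hz => hu.nonneg hΩ hz.1)

theorem sInf_le_sSup_normalForm (hΩ : IsCompact Ω) (hne : Ω.Nonempty) (h : ℝ × ℝ) :
    sInf (normalForm h '' Ω) ≤ sSup (normalForm h '' Ω) :=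
  have hz := apply_mem_Icc_of_isCompact hΩ (normalForm h) hne.some_mem
  hz.1.trans hz.2

theorem L1N_uh_eq_integral_fiberSup (hΩ : IsCompact Ω) (hne : Ω.Nonempty) (hu : MemU Ω u)
    (hh : h ≠ 0) :
    L1N Ω (uh h u) = 2 * ∫ s in sInf (normalForm h '' Ω)..sSup (normalForm h '' Ω),
      fiberSup (normalForm h) Ω u s := by
  have hsupport : ∀ s ∉ Icc (sInf (normalForm h '' Ω)) (sSup (normalForm h '' Ω)),
      fiberSup (normalForm h) Ω u s = 0 := by
    rw [← image_eq_Icc_of_isCompact_of_convex hΩ hu.2.1.1 hne]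
    exact fun _ => fiberSup_of_notMem_image u
  have hint : Integrable (fiberSup (normalForm h) Ω u) :=
    (integrableOn_iff_integrable_of_support_subset fun _ hs => by_contra fun hs' =>
      hs (hsupport _ hs')).1
      (integrableOn_Icc_of_concaveOn (hu.concaveOn_fiberSup_normalForm hΩ hne h))
  calc
    L1N Ω (uh h u) = (∫⁻ z in Ω, ‖uh h u z‖ₑ).toReal :=
      integral_norm_eq_lintegral_enorm (measurable_fderiv_apply_const ℝ u h).aestronglyMeasurable
    _ = ∫ s, 2 * fiberSup (normalForm h) Ω u s := by
      rw [setLIntegral_enorm_uh hΩ hu hh, integral_eq_lintegral_of_nonneg_ae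
        (.of_forall fun s => mul_nonneg zero_le_two (hu.fiberSup_nonneg hΩ _ s))
        (hint.const_mul 2).aestronglyMeasurable]
    _ = _ := by
      rw [integral_const_mul, ← setIntegral_eq_integral_of_forall_compl_eq_zero hsupport,
        intervalIntegral.integral_of_le (sInf_le_sSup_normalForm hΩ hne h),
        integral_Icc_eq_integral_Ioc]

theorem L1N_uh_le_of_le_comp_normalForm (hΩ : IsCompact Ω) (hne : Ω.Nonempty) (hu : MemU Ω u)
    (hh : h ≠ 0) {g : ℝ → ℝ}
    (hg : IntervalIntegrable g volume (sInf (normalForm h '' Ω)) (sSup (normalForm h '' Ω)))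
    (hle : ∀ z ∈ Ω, u z ≤ g (normalForm h z)) :
    L1N Ω (uh h u) ≤ 2 * ∫ s in sInf (normalForm h '' Ω)..sSup (normalForm h '' Ω), g s := by
  have hab := sInf_le_sSup_normalForm hΩ hne h
  rw [L1N_uh_eq_integral_fiberSup hΩ hne hu hh]
  refine mul_le_mul_of_nonneg_left (intervalIntegral.integral_mono_on hab
    ((intervalIntegrable_iff_integrableOn_Icc_of_le hab).2 (integrableOn_Icc_of_concaveOn
      (hu.concaveOn_fiberSup_normalForm hΩ hne h))) hg fun s hs => ?_) zero_le_two
  obtain ⟨z, hz, rfl, hzs⟩ := hu.exists_eq_fiberSup_normalForm hΩ hne hs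
  exact hzs ▸ hle z hz

theorem L1N_uh_le_of_le (hΩ : IsCompact Ω) (hne : Ω.Nonempty) (hu : MemU Ω u) (hh : h ≠ 0) {m : ℝ}
    (hm : ∀ z ∈ Ω, u z ≤ m) : L1N Ω (uh h u) ≤ 2 * (m * widthPar Ω h) := by
  have hle := L1N_uh_le_of_le_comp_normalForm hΩ hne hu hh intervalIntegrable_const hm
  rwa [intervalIntegral.integral_const, smul_eq_mul, mul_comm _ m] at hle

theorem L1N_uh_le_of_le_off_strip (hΩ : IsCompact Ω) (hu : MemU Ω u) (hh : h ≠ 0) {m k : ℝ}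
    {p q : ℝ × ℝ} (hp : p ∈ Ω) (hq : q ∈ Ω) (hpq : normalForm h p ≤ normalForm h q)
    (hm : ∀ z ∈ Ω, u z ≤ m)
    (hk : ∀ z ∈ Ω, normalForm h z ∉ Icc (normalForm h p) (normalForm h q) → u z ≤ k) :
    L1N Ω (uh h u) ≤ 2 * (m * (normalForm h q - normalForm h p) +
      k * (widthPar Ω h - (normalForm h q - normalForm h p))) := by
  have hne : Ω.Nonempty := ⟨p, hp⟩
  rw [L1N_uh_eq_integral_fiberSup hΩ hne hu hh]
  refine mul_le_mul_of_nonneg_left (integral_le_of_le_of_le_off_Icc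
    (integrableOn_Icc_of_concaveOn (hu.concaveOn_fiberSup_normalForm hΩ hne h))
    (apply_mem_Icc_of_isCompact hΩ _ hp) (apply_mem_Icc_of_isCompact hΩ _ hq) hpq
    (fun s hs => ?_) fun s hs hoff => ?_) zero_le_two
  all_goals obtain ⟨z, hz, rfl, hzs⟩ := hu.exists_eq_fiberSup_normalForm hΩ hne hs
  · exact hzs ▸ hm z hz
  · exact hzs ▸ hk z hz hoff

theorem mul_widthPar_add_abs_sub_le_L1N_uh (hΩ : IsCompact Ω) (hu : MemU Ω u) (hh : h ≠ 0) {k : ℝ}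
    {p q : ℝ × ℝ} (hp : p ∈ Ω) (hq : q ∈ Ω) (hkp : k ≤ u p) (hkq : k ≤ u q) :
    k * (widthPar Ω h + |normalForm h q - normalForm h p|) ≤ L1N Ω (uh h u) := by
  have hne : Ω.Nonempty := ⟨p, hp⟩
  have hle {z : ℝ × ℝ} (hz : z ∈ Ω) := le_fiberSup hΩ (normalForm h).continuous hu.1 hz
  rw [L1N_uh_eq_integral_fiberSup hΩ hne hu hh]
  exact mul_add_abs_sub_le_two_mul_integral_of_concaveOn
    (hu.concaveOn_fiberSup_normalForm hΩ hne h) (hu.fiberSup_nonneg hΩ _ _)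
    (hu.fiberSup_nonneg hΩ _ _) (apply_mem_Icc_of_isCompact hΩ _ hp)
    (apply_mem_Icc_of_isCompact hΩ _ hq) (hkp.trans (hle hp)) (hkq.trans (hle hq))

theorem mul_widthPar_le_L1N_uh (hΩ : IsCompact Ω) (hu : MemU Ω u) (hh : h ≠ 0) {p : ℝ × ℝ}
    (hp : p ∈ Ω) : u p * widthPar Ω h ≤ L1N Ω (uh h u) := by
  simpa using mul_widthPar_add_abs_sub_le_L1N_uh hΩ hu hh hp hp le_rfl le_rfl

end DirectionalNorm

theorem widthPar_pos {Ω : Set (ℝ × ℝ)} (hΩ : IsCompact Ω) (hint : (interior Ω).Nonempty)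
    {h : ℝ × ℝ} (hh : h ≠ 0) : 0 < widthPar Ω h :=
  have hz := apply_mem_Ioo_of_mem_interior hΩ (normalForm_ne_zero hh) hint.some_mem
  sub_pos.2 (hz.1.trans hz.2)

theorem MemU.exists_max {Ω : Set (ℝ × ℝ)} {u : ℝ × ℝ → ℝ} (hΩ : IsCompact Ω) (hu : MemU Ω u)
    (hne : ∃ z ∈ Ω, u z ≠ 0) : ∃ c ∈ Ω, IsMaxOn u Ω c ∧ 0 < u c := by
  obtain ⟨z, hz, hz0⟩ := hne
  obtain ⟨c, hc, hmax⟩ := hΩ.exists_isMaxOn ⟨z, hz⟩ hu.1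
  exact ⟨c, hc, hmax, ((hu.nonneg hΩ hz).lt_of_ne' hz0).trans_le (hmax hz)⟩

/-! ### Tents -/

section Tent

/-- The function on `[a, b]` that is `1` at `p`, vanishes at `a` and `b`, and is affine in between:
the profile whose fibre integral is as small as concavity allows for the value `1`. -/
noncomputable def tent (a b p s : ℝ) : ℝ := min ((p - a)⁻¹ * (s - a)) ((b - p)⁻¹ * (b - s))

variable {a b p : ℝ}

theorem exists_lipschitzWith_tent (a b p : ℝ) : ∃ K, LipschitzWith K (tent a b p) :=
  ⟨_, ((lipschitzWith_smul (p - a)⁻¹).comp (LipschitzWith.id.sub (.const a))).min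
    ((lipschitzWith_smul (b - p)⁻¹).comp ((LipschitzWith.const b).sub .id))⟩

theorem concaveOn_tent (hp : p ∈ Icc a b) : ConcaveOn ℝ univ (tent a b p) :=
  (((concaveOn_id convex_univ).sub (convexOn_const a convex_univ)).smul
      (inv_nonneg.2 (sub_nonneg.2 hp.1))).inf
    (((concaveOn_const b convex_univ).sub (convexOn_id convex_univ)).smul
      (inv_nonneg.2 (sub_nonneg.2 hp.2)))

theorem tent_nonneg (hp : p ∈ Icc a b) {s : ℝ} (hs : s ∈ Icc a b) : 0 ≤ tent a b p s :=
  le_min (mul_nonneg (inv_nonneg.2 (sub_nonneg.2 hp.1)) (sub_nonneg.2 hs.1))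
    (mul_nonneg (inv_nonneg.2 (sub_nonneg.2 hp.2)) (sub_nonneg.2 hs.2))

theorem tent_self (hp : p ∈ Ioo a b) : tent a b p p = 1 := by
  rw [tent, inv_mul_cancel₀ (sub_pos.2 hp.1).ne', inv_mul_cancel₀ (sub_pos.2 hp.2).ne', min_self]

theorem two_mul_integral_tent_le (hp : p ∈ Ioo a b) : 2 * ∫ s in a..b, tent a b p s ≤ b - a := by
  obtain ⟨K, hK⟩ := exists_lipschitzWith_tent a b p
  have hint (c d : ℝ) : IntervalIntegrable (tent a b p) volume c d :=
    hK.continuous.intervalIntegrable c d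
  have hleft : ∫ s in a..p, tent a b p s ≤ (p - a) / 2 :=
    calc
      ∫ s in a..p, tent a b p s ≤ ∫ s in a..p, (p - a)⁻¹ * (s - a) :=
        intervalIntegral.integral_mono_on hp.1.le (hint a p)
          (Continuous.intervalIntegrable (by fun_prop) a p) fun s _ => min_le_left _ _
      _ = (p - a) / 2 := by
        rw [intervalIntegral.integral_const_mul,
          intervalIntegral.integral_comp_sub_right (fun s => s), integral_id]
        field_simp [(sub_pos.2 hp.1).ne']
        ring
  have hright : ∫ s in p..b, tent a b p s ≤ (b - p) / 2 :=
    calc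
      ∫ s in p..b, tent a b p s ≤ ∫ s in p..b, (b - p)⁻¹ * (b - s) :=
        intervalIntegral.integral_mono_on hp.2.le (hint p b)
          (Continuous.intervalIntegrable (by fun_prop) p b) fun s _ => min_le_right _ _
      _ = (b - p) / 2 := by
        rw [intervalIntegral.integral_const_mul,
          intervalIntegral.integral_comp_sub_left (fun s => s), integral_id]
        field_simp [(sub_pos.2 hp.2).ne']
        ring
  rw [← intervalIntegral.integral_add_adjacent_intervals (hint a p) (hint p b)]
  linarith

end Tent

theorem concaveOn_infDist_compl {E : Type*} [NormedAddCommGroup E] [NormedSpace ℝ E] {s : Set E}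
    (hs : Convex ℝ s) : ConcaveOn ℝ s fun x => Metric.infDist x sᶜ := by
  obtain hne | hne := sᶜ.eq_empty_or_nonempty
  · simpa only [hne, Metric.infDist_empty] using concaveOn_const (0 : ℝ) hs
  refine ⟨hs, fun x hx y hy a b ha hb hab => (Metric.le_infDist hne).2 fun w hw => ?_⟩
  set r := Metric.infDist x sᶜ
  set R := Metric.infDist y sᶜ
  simp only [smul_eq_mul]
  by_contra! hlt
  have hD : 0 < a * r + b * R := dist_nonneg.trans_lt hlt
  -- `w` is the same convex combination of translates of `x` and `y` that stay within `s`.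
  have hmem {z : E} (hz : z ∈ s) :
      z + (Metric.infDist z sᶜ / (a * r + b * R)) • (w - (a • x + b • y)) ∈ s := by
    obtain hzero | hpos := Metric.infDist_nonneg (x := z) (s := sᶜ).eq_or_lt
    · rwa [← hzero, zero_div, zero_smul, add_zero]
    by_contra hz'
    have hle := Metric.infDist_le_dist_of_mem (x := z) (mem_compl hz')
    rw [dist_self_add_right, norm_smul, Real.norm_of_nonneg (by positivity), ← dist_eq_norm,
      dist_comm, div_mul_eq_mul_div, le_div_iff₀ hD] at hle
    exact hlt.not_ge (le_of_mul_le_mul_left hle hpos)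
  have hcomb := hs (hmem hx) (hmem hy) ha hb hab
  have hweights : a * (r / (a * r + b * R)) + b * (R / (a * r + b * R)) = 1 := by
    field_simp
  refine hw ?_
  convert hcomb using 1
  rw [smul_add, smul_add, smul_smul, smul_smul, add_add_add_comm, ← add_smul, hweights, one_smul,
    add_sub_cancel]

theorem memU_of_lipschitzWith {Ω : Set (ℝ × ℝ)} {u : ℝ × ℝ → ℝ} {K : NNReal}
    (hlip : LipschitzWith K u) (hconc : ConcaveOn ℝ Ω u) (hzero : ∀ z ∈ frontier Ω, u z = 0) :
    MemU Ω u :=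
  ⟨hlip.continuous.continuousOn, hconc, hzero, K, fun _ _ _ hg => hg.le_of_lipschitz hlip⟩

theorem memU_min_infDist_compl_tent {Ω : Set (ℝ × ℝ)} (hΩ : IsCompact Ω) (hconv : Convex ℝ Ω)
    (h : ℝ × ℝ) {C p : ℝ} (hC : 0 ≤ C)
    (hp : p ∈ Icc (sInf (normalForm h '' Ω)) (sSup (normalForm h '' Ω))) :
    MemU Ω fun z => min (C * Metric.infDist z Ωᶜ)
      (tent (sInf (normalForm h '' Ω)) (sSup (normalForm h '' Ω)) p (normalForm h z)) := by
  obtain ⟨K, hK⟩ :=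
    exists_lipschitzWith_tent (sInf (normalForm h '' Ω)) (sSup (normalForm h '' Ω)) p
  refine memU_of_lipschitzWith
    (((lipschitzWith_smul C).comp (Metric.lipschitz_infDist_pt Ωᶜ)).min
      (hK.comp (normalForm h).lipschitz)) ?_ fun z hz => ?_
  · exact ((concaveOn_infDist_compl hconv).smul hC).inf
      (((concaveOn_tent hp).comp_linearMap (normalForm h).toLinearMap).subset (subset_univ Ω) hconv)
  · have hdist : Metric.infDist z Ωᶜ = 0 := Metric.infDist_zero_of_mem_closure
      (frontier_subset_closure (frontier_compl Ω ▸ hz))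
    rw [hdist, mul_zero]
    exact min_eq_left (tent_nonneg hp (apply_mem_Icc_of_isCompact hΩ _
      (hΩ.isClosed.frontier_subset hz)))

theorem exists_memU_one_le_of_normalForm_eq {Ω : Set (ℝ × ℝ)} (hΩ : IsCompact Ω)
    (hconv : Convex ℝ Ω) {h : ℝ × ℝ} (hh : h ≠ 0) {p q : ℝ × ℝ} (hp : p ∈ interior Ω)
    (hq : q ∈ interior Ω) (hpq : normalForm h p = normalForm h q) :
    ∃ u, MemU Ω u ∧ 1 ≤ u p ∧ 1 ≤ u q ∧ L1N Ω (uh h u) ≤ widthPar Ω h := by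
  have hs := apply_mem_Ioo_of_mem_interior hΩ (normalForm_ne_zero hh) hp
  have hdist {z : ℝ × ℝ} (hz : z ∈ interior Ω) : 0 < Metric.infDist z Ωᶜ := by
    rw [← Metric.infDist_pos_iff_notMem_closure (nonempty_compl.2 hΩ.ne_univ), closure_compl]
    exact notMem_compl_iff.2 hz
  set C := max (Metric.infDist p Ωᶜ)⁻¹ (Metric.infDist q Ωᶜ)⁻¹
  have hu := memU_min_infDist_compl_tent hΩ hconv h
    (le_max_of_le_left (inv_nonneg.2 Metric.infDist_nonneg) : 0 ≤ C) (Ioo_subset_Icc_self hs)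
  obtain ⟨K, hK⟩ := exists_lipschitzWith_tent (sInf (normalForm h '' Ω)) (sSup (normalForm h '' Ω))
    (normalForm h p)
  refine ⟨_, hu, le_min ?_ (tent_self hs).ge, le_min ?_ (hpq ▸ (tent_self hs).ge), ?_⟩
  · exact (inv_le_iff_one_le_mul₀ (hdist hp)).1 (le_max_left _ _)
  · exact (inv_le_iff_one_le_mul₀ (hdist hq)).1 (le_max_right _ _)
  · exact (L1N_uh_le_of_le_comp_normalForm hΩ ⟨p, interior_subset hp⟩ hu hh
      (hK.continuous.intervalIntegrable _ _) fun z _ => min_le_right _ _).trans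
      (two_mul_integral_tent_le hs)

/-! ### The ratio of two directional norms -/

theorem exists_superlevel_endpoints {E : Type*} [TopologicalSpace E] [T2Space E] {Ω : Set E}
    {u f : E → ℝ} (hΩ : IsCompact Ω) (hu : ContinuousOn u Ω) (hf : ContinuousOn f Ω) {k : ℝ}
    {c : E} (hc : c ∈ Ω) (hk : k ≤ u c) :
    ∃ p ∈ Ω, ∃ q ∈ Ω, k ≤ u p ∧ k ≤ u q ∧ f p ≤ f q ∧
      ∀ z ∈ Ω, f z ∉ Icc (f p) (f q) → u z ≤ k := by
  have hK : IsCompact (Ω ∩ u ⁻¹' Ici k) := hΩ.of_isClosed_subset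
    (hu.preimage_isClosed_of_isClosed hΩ.isClosed isClosed_Ici) inter_subset_left
  have hfK : ContinuousOn f (Ω ∩ u ⁻¹' Ici k) := hf.mono inter_subset_left
  obtain ⟨p, ⟨hp, hkp⟩, hmin⟩ := hK.exists_isMinOn ⟨c, hc, hk⟩ hfK
  obtain ⟨q, ⟨hq, hkq⟩, hmax⟩ := hK.exists_isMaxOn ⟨c, hc, hk⟩ hfK
  refine ⟨p, hp, q, hq, hkp, hkq, hmin ⟨hq, hkq⟩, fun z hz hoff => ?_⟩
  by_contra! hlt
  exact hoff ⟨hmin ⟨hz, hlt.le⟩, hmax ⟨hz, hlt.le⟩⟩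

theorem exists_pos_forall_le_defect {E : Type*} [TopologicalSpace E] {Ω : Set E} {f g : E → ℝ}
    (hΩ : IsCompact Ω) (hne : Ω.Nonempty) (hf : ContinuousOn f Ω) (hg : ContinuousOn g Ω)
    (hchord : ¬ ∃ p ∈ Ω, ∃ q ∈ Ω, f p = sSup (f '' Ω) ∧ f q = sInf (f '' Ω) ∧ g p = g q) :
    ∃ d > 0, ∀ p ∈ Ω, ∀ q ∈ Ω,
      d ≤ (sSup (f '' Ω) - sInf (f '' Ω) - (f q - f p)) + |g q - g p| := by
  have hle {z : E} (hz : z ∈ Ω) : sInf (f '' Ω) ≤ f z ∧ f z ≤ sSup (f '' Ω) :=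
    subset_Icc_csInf_csSup (hΩ.image_of_continuousOn hf).bddBelow
      (hΩ.image_of_continuousOn hf).bddAbove (mem_image_of_mem f hz)
  have hcont : ContinuousOn (fun z : E × E =>
      (sSup (f '' Ω) - sInf (f '' Ω) - (f z.2 - f z.1)) + |g z.2 - g z.1|) (Ω ×ˢ Ω) := by
    have hfst : MapsTo Prod.fst (Ω ×ˢ Ω) Ω := fun _ hz => hz.1
    have hsnd : MapsTo Prod.snd (Ω ×ˢ Ω) Ω := fun _ hz => hz.2
    exact (continuousOn_const.sub ((hf.comp continuousOn_snd hsnd).sub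
      (hf.comp continuousOn_fst hfst))).add
      ((hg.comp continuousOn_snd hsnd).sub (hg.comp continuousOn_fst hfst)).abs
  obtain ⟨⟨p, q⟩, ⟨hp, hq⟩, hmin⟩ := (hΩ.prod hΩ).exists_isMinOn (hne.prod hne) hcont
  refine ⟨_, ?_, fun p' hp' q' hq' => hmin (mk_mem_prod hp' hq')⟩
  have habs := abs_nonneg (g q - g p)
  by_contra! hnonpos
  dsimp only at hnonpos
  refine hchord ⟨q, hq, p, hp, ?_, ?_, ?_⟩
  · linarith [(hle hp).1, (hle hq).2]
  · linarith [(hle hp).1, (hle hq).2]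
  · refine sub_eq_zero.1 (abs_nonpos_iff.1 ?_)
    linarith [(hle hp).1, (hle hq).2]

theorem div_le_div_of_le_mul_of_mul_le {x y a b m : ℝ} (hm : 0 < m) (hb : 0 < b) (hx : 0 ≤ x)
    (hxa : x ≤ m * a) (hyb : m * b ≤ y) : x / y ≤ a / b :=
  (div_le_div₀ (hx.trans hxa) hxa (mul_pos hm hb) hyb).trans_eq (mul_div_mul_left a b hm.ne')

theorem L1N_nonneg (Ω : Set (ℝ × ℝ)) (f : ℝ × ℝ → ℝ) : 0 ≤ L1N Ω f :=
  integral_nonneg fun _ => abs_nonneg _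

section Ratio

variable {Ω : Set (ℝ × ℝ)} {h₁ h₂ : ℝ × ℝ}

theorem L1N_uh_div_le {u : ℝ × ℝ → ℝ} (hΩ : IsCompact Ω) (hint : (interior Ω).Nonempty)
    (hu : MemU Ω u) (hu0 : ∃ z ∈ Ω, u z ≠ 0) (hh₁ : h₁ ≠ 0) (hh₂ : h₂ ≠ 0) :
    L1N Ω (uh h₁ u) / L1N Ω (uh h₂ u) ≤ 2 * (widthPar Ω h₁ / widthPar Ω h₂) := by
  obtain ⟨c, hc, hmax, hpos⟩ := hu.exists_max hΩ hu0
  rw [mul_div_assoc']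
  refine div_le_div_of_le_mul_of_mul_le hpos (widthPar_pos hΩ hint hh₂) (L1N_nonneg _ _) ?_
    (mul_widthPar_le_L1N_uh hΩ hu hh₂ hc)
  linarith [L1N_uh_le_of_le hΩ ⟨c, hc⟩ hu hh₁ hmax]

theorem exists_le_L1N_uh_div_of_chord (hΩ : IsCompact Ω) (hconv : Convex ℝ Ω)
    (hint : (interior Ω).Nonempty) (hh₁ : h₁ ≠ 0) (hh₂ : h₂ ≠ 0) {z₁ z₂ : ℝ × ℝ} (hz₁ : z₁ ∈ Ω)
    (hz₂ : z₂ ∈ Ω) (hsup : normalForm h₁ z₁ = sSup (normalForm h₁ '' Ω))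
    (hinf : normalForm h₁ z₂ = sInf (normalForm h₁ '' Ω))
    (hz : normalForm h₂ z₁ = normalForm h₂ z₂) {ε : ℝ} (hε₀ : 0 < ε) (hε₁ : ε ≤ 1) :
    ∃ u, MemU Ω u ∧ (∃ z ∈ Ω, u z ≠ 0) ∧
      (2 - ε) * (widthPar Ω h₁ / widthPar Ω h₂) ≤ L1N Ω (uh h₁ u) / L1N Ω (uh h₂ u) := by
  obtain ⟨c, hc⟩ := hint
  have hw₁ := widthPar_pos hΩ ⟨c, hc⟩ hh₁
  have hinterior {z : ℝ × ℝ} (hz : z ∈ Ω) : ε • c + (1 - ε) • z ∈ interior Ω :=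
    hconv.combo_interior_self_mem_interior hc hz hε₀ (sub_nonneg.2 hε₁) (add_sub_cancel _ _)
  set p := ε • c + (1 - ε) • z₁ with hp
  set q := ε • c + (1 - ε) • z₂ with hq
  have hpΩ : p ∈ interior Ω := hinterior hz₁
  have hqΩ : q ∈ interior Ω := hinterior hz₂
  have hpq : normalForm h₂ p = normalForm h₂ q := by
    simp only [hp, hq, map_add, map_smul, hz]
  have hdist : normalForm h₁ p - normalForm h₁ q = (1 - ε) * widthPar Ω h₁ := by
    simp only [hp, hq, map_add, map_smul, smul_eq_mul, hsup, hinf]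
    change _ = (1 - ε) * (sSup (normalForm h₁ '' Ω) - sInf (normalForm h₁ '' Ω))
    ring
  obtain ⟨u, hu, hup, huq, hle⟩ := exists_memU_one_le_of_normalForm_eq hΩ hconv hh₂ hpΩ hqΩ hpq
  have hL₁ := mul_widthPar_add_abs_sub_le_L1N_uh hΩ hu hh₁ (interior_subset hqΩ)
    (interior_subset hpΩ) huq hup
  have hL₂ : 0 < L1N Ω (uh h₂ u) :=
    (mul_pos (one_pos.trans_le hup) (widthPar_pos hΩ ⟨c, hc⟩ hh₂)).trans_le
      (mul_widthPar_le_L1N_uh hΩ hu hh₂ (interior_subset hpΩ))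
  rw [hdist, abs_of_nonneg (mul_nonneg (sub_nonneg.2 hε₁) hw₁.le)] at hL₁
  refine ⟨u, hu, ⟨p, interior_subset hpΩ, (one_pos.trans_le hup).ne'⟩, ?_⟩
  rw [mul_div_assoc']
  exact div_le_div₀ (L1N_nonneg _ _) (by linarith) hL₂ hle

theorem L1N_uh_div_le_max_of_le_defect {u : ℝ × ℝ → ℝ} (hΩ : IsCompact Ω)
    (hint : (interior Ω).Nonempty) (hu : MemU Ω u) (hu0 : ∃ z ∈ Ω, u z ≠ 0) (hh₁ : h₁ ≠ 0)
    (hh₂ : h₂ ≠ 0) {d τ : ℝ} (hτ₀ : 0 ≤ τ) (hτ₁ : τ < 1) (hd : 0 ≤ d)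
    (hdefect : ∀ p ∈ Ω, ∀ q ∈ Ω, 2 * d ≤
      (widthPar Ω h₁ - (normalForm h₁ q - normalForm h₁ p)) +
        |normalForm h₂ q - normalForm h₂ p|) :
    L1N Ω (uh h₁ u) / L1N Ω (uh h₂ u) ≤
      max (2 * (widthPar Ω h₁ - τ * d) / widthPar Ω h₂)
        (2 * widthPar Ω h₁ / ((1 - τ) * (widthPar Ω h₂ + d))) := by
  obtain ⟨c, hc, hmax, hpos⟩ := hu.exists_max hΩ hu0
  have hw₂ := widthPar_pos hΩ hint hh₂
  obtain ⟨p, hp, q, hq, hkp, hkq, hpq, hoff⟩ := exists_superlevel_endpoints hΩ hu.1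
    (normalForm h₁).continuous.continuousOn hc
    (mul_le_of_le_one_left hpos.le (sub_le_self 1 hτ₀))
  obtain hshort | hshear : d ≤ widthPar Ω h₁ - (normalForm h₁ q - normalForm h₁ p) ∨
      d ≤ |normalForm h₂ q - normalForm h₂ p| := by
    by_contra! hlt
    linarith [hdefect p hp q hq]
  · refine le_max_of_le_left (div_le_div_of_le_mul_of_mul_le hpos hw₂ (L1N_nonneg _ _) ?_
      (mul_widthPar_le_L1N_uh hΩ hu hh₂ hc))
    linarith [L1N_uh_le_of_le_off_strip hΩ hu hh₁ hp hq hpq hmax hoff,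
      mul_le_mul_of_nonneg_left hshort (mul_nonneg hpos.le hτ₀)]
  · refine le_max_of_le_right (div_le_div_of_le_mul_of_mul_le hpos
      (mul_pos (sub_pos.2 hτ₁) (add_pos_of_pos_of_nonneg hw₂ hd)) (L1N_nonneg _ _) ?_ ?_)
    · linarith [L1N_uh_le_of_le hΩ ⟨c, hc⟩ hu hh₁ hmax]
    · linarith [mul_widthPar_add_abs_sub_le_L1N_uh hΩ hu hh₂ hp hq hkp hkq,
        mul_le_mul_of_nonneg_left hshear (mul_nonneg (sub_pos.2 hτ₁).le hpos.le)]

theorem exists_lt_forall_L1N_uh_div_le (hΩ : IsCompact Ω) (hint : (interior Ω).Nonempty)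
    (hh₁ : h₁ ≠ 0) (hh₂ : h₂ ≠ 0)
    (hchord : ¬ ∃ p ∈ Ω, ∃ q ∈ Ω, normalForm h₁ p = sSup (normalForm h₁ '' Ω) ∧
      normalForm h₁ q = sInf (normalForm h₁ '' Ω) ∧ normalForm h₂ p = normalForm h₂ q) :
    ∃ r < 2 * (widthPar Ω h₁ / widthPar Ω h₂), 0 ≤ r ∧
      ∀ u, MemU Ω u → (∃ z ∈ Ω, u z ≠ 0) → L1N Ω (uh h₁ u) / L1N Ω (uh h₂ u) ≤ r := by
  have hw₁ := widthPar_pos hΩ hint hh₁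
  have hw₂ := widthPar_pos hΩ hint hh₂
  obtain ⟨d, hd, hdefect⟩ := exists_pos_forall_le_defect hΩ (hint.mono interior_subset)
    (normalForm h₁).continuous.continuousOn (normalForm h₂).continuous.continuousOn hchord
  obtain ⟨e, he, rfl⟩ : ∃ e > 0, 2 * e = d := ⟨d / 2, half_pos hd, by ring⟩
  set τ := e / 2 / (widthPar Ω h₂ + e) with hτ
  have hτ₀ : 0 < τ := by positivity
  have hτ₁ : τ < 1 := (div_lt_one (by positivity)).2 (by linarith)
  have hτ_eq : (1 - τ) * (widthPar Ω h₂ + e) = widthPar Ω h₂ + e / 2 := by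
    rw [hτ]
    field_simp
    ring
  refine ⟨max (2 * (widthPar Ω h₁ - τ * e) / widthPar Ω h₂)
    (2 * widthPar Ω h₁ / ((1 - τ) * (widthPar Ω h₂ + e))), ?_, ?_, fun u hu hu0 =>
      L1N_uh_div_le_max_of_le_defect hΩ hint hu hu0 hh₁ hh₂ hτ₀.le hτ₁ he.le hdefect⟩
  · rw [mul_div_assoc', hτ_eq]
    refine max_lt (div_lt_div_of_pos_right ?_ hw₂) (div_lt_div_of_pos_left ?_ hw₂ ?_)
    · linarith [mul_pos hτ₀ he]
    · positivity
    · linarith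
  · rw [hτ_eq]
    exact le_max_of_le_right (by positivity)

end Ratio

theorem stmt_8_general (Ω : Set (ℝ × ℝ)) (hΩc : IsCompact Ω) (hΩconv : Convex ℝ Ω)
    (hΩint : (interior Ω).Nonempty) (h₁ h₂ : ℝ × ℝ) (hh₁ : h₁ ≠ 0) (hh₂ : h₂ ≠ 0) :
    sSup {r : ℝ | ∃ u : ℝ × ℝ → ℝ, MemU Ω u ∧ (∃ z ∈ Ω, u z ≠ 0) ∧
        r = L1N Ω (uh h₁ u) / L1N Ω (uh h₂ u)} = 2 * (widthPar Ω h₁ / widthPar Ω h₂) ↔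
      ∃ z₁ ∈ Ω, ∃ z₂ ∈ Ω, normalForm h₁ z₁ = sSup (normalForm h₁ '' Ω) ∧
        normalForm h₁ z₂ = sInf (normalForm h₁ '' Ω) ∧ ∃ t : ℝ, z₁ = z₂ + t • h₂ := by
  simp only [← normalForm_eq_iff hh₂]
  have hw := div_pos (widthPar_pos hΩc hΩint hh₁) (widthPar_pos hΩc hΩint hh₂)
  constructor
  · intro hsup
    by_contra hchord
    obtain ⟨r, hr, hr₀, hle⟩ := exists_lt_forall_L1N_uh_div_le hΩc hΩint hh₁ hh₂ hchord
    refine hr.not_ge (hsup ▸ Real.sSup_le ?_ hr₀)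
    rintro _ ⟨u, hu, hu0, rfl⟩
    exact hle u hu hu0
  · rintro ⟨z₁, hz₁, z₂, hz₂, hsup, hinf, hz⟩
    have hexists {ε : ℝ} (hε₀ : 0 < ε) (hε₁ : ε ≤ 1) :=
      exists_le_L1N_uh_div_of_chord hΩc hΩconv hΩint hh₁ hh₂ hz₁ hz₂ hsup hinf hz hε₀ hε₁
    obtain ⟨v, hv, hv0, -⟩ := hexists one_pos le_rfl
    refine csSup_eq_of_forall_le_of_forall_lt_exists_gt ⟨_, v, hv, hv0, rfl⟩ ?_ fun r hr => ?_
    · rintro _ ⟨u, hu, hu0, rfl⟩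
      exact L1N_uh_div_le hΩc hΩint hu hu0 hh₁ hh₂
    · set W := widthPar Ω h₁ / widthPar Ω h₂
      obtain ⟨r', hr', hr'W⟩ := exists_between (max_lt hr (lt_two_mul_self hw))
      obtain ⟨hrr', hWr'⟩ := max_lt_iff.1 hr'
      obtain ⟨u, hu, hu0, hle⟩ := hexists (sub_pos.2 ((div_lt_iff₀ hw).2 hr'W))
        (by linarith [(one_le_div₀ hw).2 hWr'.le])
      refine ⟨_, ⟨u, hu, hu0, rfl⟩, hrr'.trans_le (le_trans (le_of_eq ?_) hle)⟩
      rw [sub_sub_cancel, div_mul_cancel₀ _ hw.ne']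

/-- Corollary 2: for non-collinear unit vectors `h₁, h₂`, the supremum of
`‖u_{h₁}‖₁ / ‖u_{h₂}‖₁` over nonzero `u ∈ 𝒰_Ω` equals `2 w₁ / w₂` iff some straight line
parallel to `h₂` intersects both edges of `Ω` parallel to `h₁` (points `z₁, z₂` of `Ω`
lying on the two support lines of `Ω` parallel to `h₁` and differing by a multiple
of `h₂`). -/
theorem stmt_8 (Ω : Set (ℝ × ℝ)) (hΩc : IsCompact Ω) (hΩconv : Convex ℝ Ω)
    (hΩint : (interior Ω).Nonempty)
    (h₁ h₂ : ℝ × ℝ) (hh₁ : h₁.1 ^ 2 + h₁.2 ^ 2 = 1) (hh₂ : h₂.1 ^ 2 + h₂.2 ^ 2 = 1)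
    (hnc : ¬ ∃ t : ℝ, h₁ = t • h₂) :
    sSup {r : ℝ | ∃ u : ℝ × ℝ → ℝ, MemU Ω u ∧ (∃ z ∈ Ω, u z ≠ 0) ∧
        r = L1N Ω (uh h₁ u) / L1N Ω (uh h₂ u)} = 2 * (widthPar Ω h₁ / widthPar Ω h₂) ↔
      ∃ z₁ ∈ Ω, ∃ z₂ ∈ Ω,
        -h₁.2 * z₁.1 + h₁.1 * z₁.2 =
          sSup ((fun z : ℝ × ℝ => -h₁.2 * z.1 + h₁.1 * z.2) '' Ω) ∧
        -h₁.2 * z₂.1 + h₁.1 * z₂.2 =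
          sInf ((fun z : ℝ × ℝ => -h₁.2 * z.1 + h₁.1 * z.2) '' Ω) ∧
        ∃ t : ℝ, z₁ = z₂ + t • h₂ := by
  exact stmt_8_general Ω hΩc hΩconv hΩint h₁ h₂
    (by rintro rfl; norm_num at hh₁) (by rintro rfl; norm_num at hh₂)
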